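/- Let E₁, …, E_m be nontrivial word equations on n unknowns such that Sol_{n−1}(E₁) ⊋ Sol_{n−1}(E₁, E₂) ⊋ ⋯ ⊋ Sol_{n−1}(E₁, …, E_m) ≠ ∅, where Sol_{n−1} denotes the set of common solutions of rank n − 1. If the set of length types (regarded as vectors in ℚ^n) of the common solutions of E₁ and E₂ of rank n − 1 is covered by a union of N ℚ-linear subspaces of ℚ^n of dimension n − 1, then m ≤ N + 1. -/

import Mathlib

open Polynomial

/-- The characteristic polynomial `P(w)` of a word. -/
noncomputable def wordPoly (w : List ℕ) : Polynomial ℤ :=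
  ∑ i ∈ Finset.range w.length, Polynomial.C (w.getD i 0 : ℤ) * Polynomial.X ^ i

/-- Application of a morphism (given by the images of the unknowns) to a word. -/
def mApply {n : ℕ} {β : Type*} (h : Fin n → List β) (w : List (Fin n)) : List β :=
  (w.map h).flatten

/-- The morphism maps every unknown to a word over the alphabet `A`. -/
def IntoAlph {n : ℕ} (A : Finset ℕ) (h : Fin n → List ℕ) : Prop :=
  ∀ i, ∀ a ∈ h i, a ∈ A

/-- `w` is a product of words from `A`. -/
def InStar (A : Finset (List ℕ)) (w : List ℕ) : Prop :=
  ∃ l : List (List ℕ), (∀ u ∈ l, u ∈ A) ∧ l.flatten = w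

/-- The combinatorial rank of a morphism: the smallest `r` such that there is a set of
`r` words whose products contain all images of the unknowns. -/
noncomputable def mRank {n : ℕ} (h : Fin n → List ℕ) : ℕ :=
  sInf {r | ∃ A : Finset (List ℕ), A.card = r ∧ ∀ i, InStar A (h i)}

/-- The length type of a morphism, as a rational vector. -/
def lenQ {n : ℕ} (h : Fin n → List ℕ) : Fin n → ℚ :=
  fun i => ((h i).length : ℚ)

/-- `|w|_L`: the length of the image of `w` under any morphism of length type `L`. -/
def lenL {n : ℕ} (L : Fin n → ℕ) (w : List (Fin n)) : ℕ :=
  (w.map L).sum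

/-- The polynomial `Q_{E,x,L}` for the word equation `u = v`, the unknown `x` and the
length type `L`. -/
noncomputable def eqPoly {n : ℕ} (u v : List (Fin n)) (x : Fin n) (L : Fin n → ℕ) :
    Polynomial ℤ :=
  (∑ i ∈ Finset.range u.length,
      if u.getD i x = x then (Polynomial.X : Polynomial ℤ) ^ lenL L (u.take i) else 0)
    - ∑ i ∈ Finset.range v.length,
      if v.getD i x = x then (Polynomial.X : Polynomial ℤ) ^ lenL L (v.take i) else 0

/-- Embedding of `ℤ[X]` into the field `ℚ(X)` of rational functions. -/
noncomputable def toRF (p : Polynomial ℤ) : RatFunc ℚ :=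
  algebraMap (Polynomial ℚ) (RatFunc ℚ) (p.map (Int.castRingHom ℚ))

/-- Weighted polynomial of a word. -/
def pw {β R : Type*} [CommRing R] (t c : β → R) : List β → R
  | [] => 0
  | y :: w => c y + t y * pw t c w

lemma mApply_nil {n : ℕ} {β : Type*} (h : Fin n → List β) : mApply h [] = [] := rfl

lemma mApply_cons {n : ℕ} {β : Type*} (h : Fin n → List β) (x : Fin n) (w : List (Fin n)) :
    mApply h (x :: w) = h x ++ mApply h w := by simp [mApply]

lemma mApply_append {n : ℕ} {β : Type*} (h : Fin n → List β) (w w' : List (Fin n)) :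
    mApply h (w ++ w') = mApply h w ++ mApply h w' := by simp [mApply]

lemma mApply_comp {n r : ℕ} {β : Type*} (th : Fin r → List β) (g : Fin n → List (Fin r))
    (w : List (Fin n)) :
    mApply th (mApply g w) = mApply (fun x => mApply th (g x)) w := by
  induction w with
  | nil => rfl
  | cons x w ih => simp [mApply_cons, mApply_append, ih]

lemma pw_append {β R : Type*} [CommRing R] (t c : β → R) (w w' : List β) :
    pw t c (w ++ w') = pw t c w + (w.map t).prod * pw t c w' := by
  induction w with
  | nil => simp [pw]
  | cons y w ih => simp only [List.cons_append, pw, ih, List.map_cons, List.prod_cons]; ring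

lemma pw_mApply {n : ℕ} {β R : Type*} [CommRing R] (t c : β → R) (h : Fin n → List β)
    (u : List (Fin n)) :
    pw t c (mApply h u) = pw (fun x => ((h x).map t).prod) (fun x => pw t c (h x)) u := by
  induction u with
  | nil => rfl
  | cons x u ih => rw [mApply_cons, pw_append, ih]; rfl

/-- The polynomial counting the occurrences of `x`. -/
def qw {β R : Type*} [DecidableEq β] [CommRing R] (t : β → R) (u : List β) (x : β) : R :=
  pw t (fun y => if y = x then 1 else 0) u

lemma pw_eq_sum {β R : Type*} [DecidableEq β] [Fintype β] [CommRing R] (t c : β → R)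
    (u : List β) : pw t c u = ∑ x, qw t u x * c x := by
  induction u with
  | nil => simp [pw, qw]
  | cons y u ih =>
    simp only [qw, pw] at ih ⊢
    rw [ih]
    simp only [add_mul, Finset.sum_add_distrib, Finset.mul_sum, mul_assoc]
    simp

lemma map_pw {β R R' : Type*} [CommRing R] [CommRing R'] (f : R →+* R') (t c : β → R)
    (u : List β) : f (pw t c u) = pw (fun y => f (t y)) (fun y => f (c y)) u := by
  induction u with
  | nil => simp [pw]
  | cons y u ih => simp [pw, ih]

lemma map_qw {β R R' : Type*} [DecidableEq β] [CommRing R] [CommRing R'] (f : R →+* R')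
    (t : β → R) (u : List β) (x : β) : f (qw t u x) = qw (fun y => f (t y)) u x := by
  unfold qw
  rw [map_pw]
  congr 1
  funext y
  split_ifs <;> simp

lemma qw_one {β : Type*} [DecidableEq β] (u : List β) (x : β) :
    qw (fun _ => (1 : ℤ)) u x = (u.count x : ℤ) := by
  induction u with
  | nil => simp [qw, pw]
  | cons y u ih =>
    simp only [qw, pw] at ih ⊢
    rw [ih, List.count_cons]
    by_cases h : y = x <;> simp [h]; ring

lemma qw_nonneg {β : Type*} [DecidableEq β] (t : β → ℤ) (ht : ∀ y, 0 ≤ t y) (u : List β)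
    (x : β) : 0 ≤ qw t u x := by
  induction u with
  | nil => simp [qw, pw]
  | cons y u ih =>
    simp only [qw, pw] at ih ⊢
    have := mul_nonneg (ht y) ih
    split_ifs <;> linarith

lemma qw_diff_ne_aux {n : ℕ} (L : Fin n → ℕ) (x y : Fin n) (hxy : x ≠ y) (hy : L y ≠ 0)
    (u v : List (Fin n)) :
    qw (fun i => (X : ℤ[X]) ^ L i) (x :: u) x - qw (fun i => (X : ℤ[X]) ^ L i) (y :: v) x ≠ 0 := by
  intro h
  have h2 := congrArg (evalRingHom (0 : ℤ)) h
  rw [map_sub, map_qw, map_qw] at h2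
  have h3 := qw_nonneg (fun i => (evalRingHom (0 : ℤ)) ((X : ℤ[X]) ^ L i))
    (by intro i; simp) u x
  have h4 : 0 ≤ (evalRingHom (0 : ℤ)) ((X : ℤ[X]) ^ L x) := by simp
  have h5 : (evalRingHom (0 : ℤ)) ((X : ℤ[X]) ^ L y) = 0 := by simp [hy]
  have h6 := mul_nonneg h4 h3
  simp only [qw, pw] at h2 h6
  rw [h5] at h2
  simp only [if_true, if_neg hxy.symm, map_zero] at h2
  linarith

lemma qw_diff_ne {n : ℕ} (L : Fin n → ℕ) (hL : ∀ x y, x ≠ y → L x = 0 → L y ≠ 0)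
    (u v : List (Fin n)) (huv : u ≠ v) :
    ∃ x, qw (fun i => (X : ℤ[X]) ^ L i) u x - qw (fun i => (X : ℤ[X]) ^ L i) v x ≠ 0 := by
  induction u generalizing v with
  | nil =>
    cases v with
    | nil => exact absurd rfl huv
    | cons y v =>
      refine ⟨y, fun h => ?_⟩
      have h2 := congrArg (evalRingHom (1 : ℤ)) h
      rw [map_sub, map_qw, map_qw] at h2
      simp [qw_one] at h2
      omega
  | cons x u ih =>
    cases v with
    | nil =>
      refine ⟨x, fun h => ?_⟩
      have h2 := congrArg (evalRingHom (1 : ℤ)) h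
      rw [map_sub, map_qw, map_qw] at h2
      simp [qw_one] at h2
      omega
    | cons y v =>
      by_cases hxy : x = y
      · subst hxy
        obtain ⟨z, hz⟩ := ih v (by rintro rfl; exact huv rfl)
        refine ⟨z, ?_⟩
        have : qw (fun i => (X : ℤ[X]) ^ L i) (x :: u) z - qw (fun i => (X : ℤ[X]) ^ L i) (x :: v) z
          = X ^ L x * (qw (fun i => (X : ℤ[X]) ^ L i) u z - qw (fun i => (X : ℤ[X]) ^ L i) v z) := by
          simp only [qw, pw]; ring
        rw [this]
        exact mul_ne_zero (pow_ne_zero _ X_ne_zero) hz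
      · by_cases hy : L y = 0
        · refine ⟨y, ?_⟩
          have := qw_diff_ne_aux L y x (Ne.symm hxy) (hL y x (Ne.symm hxy) hy) v u
          rw [← neg_sub]
          exact neg_ne_zero.mpr this
        · exact ⟨x, qw_diff_ne_aux L x y hxy hy u v⟩

/-- recursive characteristic polynomial -/
noncomputable def cPoly (w : List ℕ) : ℤ[X] := pw (fun _ => X) (fun a : ℕ => C (a : ℤ)) w

lemma cPoly_inj (w w' : List ℕ) (hw : ∀ a ∈ w, 0 < a) (hw' : ∀ a ∈ w', 0 < a)
    (h : cPoly w = cPoly w') : w = w' := by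
  induction w generalizing w' with
  | nil =>
    cases w' with
    | nil => rfl
    | cons b w' =>
      have := congrArg (fun p => coeff p 0) h
      have hb := hw' b (by simp)
      simp [cPoly, pw] at this
      omega
  | cons a w ih =>
    cases w' with
    | nil =>
      have := congrArg (fun p => coeff p 0) h
      have hb := hw a (by simp)
      simp [cPoly, pw] at this
      omega
    | cons b w' =>
      have h0 := congrArg (fun p => coeff p 0) h
      simp [cPoly, pw] at h0
      subst h0
      have : cPoly w = cPoly w' := by
        simp only [cPoly, pw] at h ⊢
        exact mul_left_cancel₀ X_ne_zero (add_left_cancel h)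
      rw [ih w' (fun a ha => hw a (by simp [ha])) (fun a ha => hw' a (by simp [ha])) this]

lemma cPoly_mApply {n : ℕ} (h : Fin n → List ℕ) (u : List (Fin n)) :
    cPoly (mApply h u) = ∑ x, qw (fun i => (X : ℤ[X]) ^ (h i).length) u x * cPoly (h x) := by
  unfold cPoly
  rw [pw_mApply, pw_eq_sum]
  simp

lemma qw_mApply {n r : ℕ} {R : Type*} [CommRing R] (z : Fin r → R) (g : Fin n → List (Fin r))
    (u : List (Fin n)) (i : Fin r) :
    qw z (mApply g u) i = ∑ x, qw (fun x => ((g x).map z).prod) u x * qw z (g x) i := by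
  conv_lhs => unfold qw
  rw [pw_mApply, pw_eq_sum]
  rfl

/-- The difference vector is killed by a solution. -/
lemma kill {n r : ℕ} {R : Type*} [CommRing R] (z : Fin r → R) (g : Fin n → List (Fin r))
    (u v : List (Fin n)) (h : mApply g u = mApply g v) (i : Fin r) :
    ∑ x, (qw (fun x => ((g x).map z).prod) u x - qw (fun x => ((g x).map z).prod) v x)
      * qw z (g x) i = 0 := by
  simp only [sub_mul, Finset.sum_sub_distrib]
  rw [← qw_mApply, ← qw_mApply, h, sub_self]

/-- Parikh matrix. -/
def pk {n r : ℕ} (g : Fin n → List (Fin r)) (i : Fin r) (x : Fin n) : ℚ := ((g x).count i : ℚ)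

lemma pk_det {N : ℕ} {R : Type*} [CommRing R] [IsDomain R] (f : R →+* ℤ) (S : Matrix (Fin N) (Fin N) R)
    (M : Fin N → Fin N → ℚ) (hM : LinearIndependent ℚ M)
    (hf : ∀ x i, ((f (S x i) : ℤ) : ℚ) = M i x) (Q : Fin N → R)
    (hQ : ∀ i, ∑ x, Q x * S x i = 0) : Q = 0 := by
  have hdet : S.det ≠ 0 := by
    intro h0
    have h1 : ((Int.castRingHom ℚ).comp f) S.det = 0 := by rw [h0]; simp
    rw [RingHom.map_det] at h1
    have h2 : (((Int.castRingHom ℚ).comp f).mapMatrix S) = (Matrix.of M).transpose := by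
      ext x i
      simpa using hf x i
    rw [h2, Matrix.det_transpose] at h1
    have h3 : IsUnit (Matrix.of M) := by
      rw [← Matrix.linearIndependent_rows_iff_isUnit]
      exact hM
    rw [Matrix.isUnit_iff_isUnit_det, h1] at h3
    exact not_isUnit_zero h3
  apply Matrix.eq_zero_of_vecMul_eq_zero hdet
  ext i
  simpa [Matrix.vecMul, dotProduct] using hQ i

lemma pk_full {n : ℕ} {R : Type*} [CommRing R] [IsDomain R] (f : R →+* ℤ) (z : Fin n → R)
    (hz : ∀ i, f (z i) = 1) (g : Fin n → List (Fin n)) (hg : LinearIndependent ℚ (pk g))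
    (Q : Fin n → R) (hQ : ∀ i, ∑ x, Q x * qw z (g x) i = 0) : Q = 0 := by
  refine pk_det f (fun x i => qw z (g x) i) _ hg ?_ Q hQ
  intro x i
  rw [map_qw]
  simp [hz, qw_one, pk]

lemma pk_codim {N : ℕ} {R : Type*} [CommRing R] [IsDomain R] (f : R →+* ℤ) (z : Fin N → R)
    (hz : ∀ i, f (z i) = 1) (g : Fin (N + 1) → List (Fin N)) (x0 : Fin (N + 1))
    (hg : LinearIndependent ℚ (fun i => fun y : Fin N => pk g i (x0.succAbove y)))
    (Q : Fin (N + 1) → R) (hQ : ∀ i, ∑ x, Q x * qw z (g x) i = 0) (h0 : Q x0 = 0) : Q = 0 := by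
  have : (fun y => Q (x0.succAbove y)) = 0 := by
    refine pk_det f (fun y i => qw z (g (x0.succAbove y)) i) _ hg ?_ _ ?_
    · intro x i
      rw [map_qw]
      simp [hz, qw_one, pk]
    · intro i
      have := hQ i
      rw [Fin.sum_univ_succAbove _ x0, h0, zero_mul, zero_add] at this
      exact this
  funext x
  rcases Fin.eq_self_or_eq_succAbove x0 x with rfl | ⟨y, rfl⟩
  · exact h0
  · exact congrFun this y

lemma del_row {N : ℕ} (M : Fin N → Fin (N + 1) → ℚ) (hM : LinearIndependent ℚ M)
    (x0 : Fin (N + 1)) (hx : Pi.single x0 (1 : ℚ) ∉ Submodule.span ℚ (Set.range M)) :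
    LinearIndependent ℚ (fun i => fun y : Fin N => M i (x0.succAbove y)) := by
  rw [Fintype.linearIndependent_iff] at hM ⊢
  intro c hc
  apply hM
  have hmem : ∑ i, c i • M i ∈ Submodule.span ℚ (Set.range M) :=
    Submodule.sum_mem _ fun i _ => Submodule.smul_mem _ _ (Submodule.subset_span ⟨i, rfl⟩)
  have hs : ∑ i, c i • M i = (∑ i, c i • M i) x0 • Pi.single x0 (1 : ℚ) := by
    funext x
    rcases Fin.eq_self_or_eq_succAbove x0 x with rfl | ⟨y, rfl⟩
    · simp
    · have := congrFun hc y
      simp only [Finset.sum_apply, Pi.smul_apply, Pi.zero_apply] at this ⊢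
      simpa using this
  by_contra hne
  have hne' : (∑ i, c i • M i) x0 ≠ 0 := by
    intro h; rw [h, zero_smul] at hs; exact hne hs
  apply hx
  rw [hs] at hmem
  exact (Submodule.smul_mem_iff _ hne').mp hmem

lemma exists_single {n : ℕ} (V : Submodule ℚ (Fin n → ℚ)) (hV : V ≠ ⊤) :
    ∃ x0, Pi.single x0 (1 : ℚ) ∉ V := by
  by_contra! h
  apply hV
  rw [eq_top_iff, ← (Pi.basisFun ℚ (Fin n)).span_eq, Submodule.span_le]
  rintro _ ⟨i, rfl⟩
  simpa using h i

/-- Specialisation. -/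
lemma special {n r : ℕ} (s : Fin n → Fin r →₀ ℕ) (L : Fin n → ℕ) (mu : Fin r → ℚ)
    (hL : ∀ x, (L x : ℚ) = ∑ i, mu i * (s x i : ℚ)) (F : MvPolynomial (Fin n) ℤ)
    (hF : MvPolynomial.aeval (fun x => (MvPolynomial.monomial (s x) (1 : ℤ))) F = 0) :
    MvPolynomial.aeval (fun x => (X : ℤ[X]) ^ L x) F = 0 := by
  let fl : (Fin r →₀ ℕ) → ℕ := fun m => ⌊∑ i, mu i * (m i : ℚ)⌋₊
  let Lam : MvPolynomial (Fin r) ℤ →ₗ[ℤ] ℤ[X] :=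
    (MvPolynomial.basisMonomials (Fin r) ℤ).constr ℤ (fun m => (X : ℤ[X]) ^ fl m)
  have hLam : ∀ m, Lam (MvPolynomial.monomial m 1) = X ^ fl m := by
    intro m
    have := (MvPolynomial.basisMonomials (Fin r) ℤ).constr_basis ℤ
      (fun m => (X : ℤ[X]) ^ fl m) m
    simpa [Lam] using this
  have key : Lam ∘ₗ (MvPolynomial.aeval
      (fun x => (MvPolynomial.monomial (s x) (1 : ℤ)))).toLinearMap =
      (MvPolynomial.aeval (fun x => (X : ℤ[X]) ^ L x)).toLinearMap := by
    apply (MvPolynomial.basisMonomials (Fin n) ℤ).ext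
    intro m
    simp only [MvPolynomial.coe_basisMonomials, LinearMap.comp_apply, AlgHom.toLinearMap_apply,
      MvPolynomial.aeval_monomial, map_one, one_mul]
    have h1 : (m.prod fun x k => (MvPolynomial.monomial (s x) (1 : ℤ)) ^ k)
        = MvPolynomial.monomial (∑ x, m x • s x) 1 := by
      rw [Finsupp.prod_fintype _ _ (by simp)]
      simp only [MvPolynomial.monomial_pow, one_pow]
      rw [← MvPolynomial.monomial_sum_one]
    rw [h1, hLam, Finsupp.prod_fintype _ _ (by simp)]
    simp only [← pow_mul, Finset.prod_pow_eq_pow_sum]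
    congr 1
    have : (∑ i, mu i * (((∑ x, m x • s x : Fin r →₀ ℕ) i : ℕ) : ℚ)) = ((∑ x, L x * m x : ℕ) : ℚ) := by
      have hc : ∀ i, (((∑ x, m x • s x : Fin r →₀ ℕ) i : ℕ) : ℚ) = ∑ x, (m x : ℚ) * (s x i : ℚ) := by
        intro i
        rw [Finsupp.finsetSum_apply]
        push_cast
        simp
      simp only [hc]
      push_cast
      simp only [hL, Finset.sum_mul, Finset.mul_sum]
      rw [Finset.sum_comm]
      refine Finset.sum_congr rfl fun x _ => Finset.sum_congr rfl fun i _ => by ring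
    show ⌊_⌋₊ = _
    rw [this, Nat.floor_natCast]
  have := LinearMap.congr_fun key F
  simp only [LinearMap.comp_apply, AlgHom.toLinearMap_apply, hF, map_zero] at this
  exact this.symm

lemma prod_monomial {r : ℕ} (w : List (Fin r)) :
    (w.map (fun i => (MvPolynomial.X i : MvPolynomial (Fin r) ℤ))).prod
      = MvPolynomial.monomial (Finsupp.equivFunOnFinite.symm (fun i => w.count i)) 1 := by
  induction w with
  | nil =>
    simp only [List.map_nil, List.prod_nil, List.count_nil]
    rw [MvPolynomial.one_def]
    have h0 : (Finsupp.equivFunOnFinite.symm (fun _ => 0) : Fin r →₀ ℕ) = 0 := by ext; simp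
    rw [h0]
  | cons a w ih =>
    rw [List.map_cons, List.prod_cons, ih, MvPolynomial.X, MvPolynomial.monomial_mul, one_mul]
    have h0 : (Finsupp.single a 1 + Finsupp.equivFunOnFinite.symm (fun i => w.count i) : Fin r →₀ ℕ)
        = Finsupp.equivFunOnFinite.symm (fun i => (a :: w).count i) := by
      ext i
      simp [List.count_cons, Finsupp.single_apply, add_comm]
    rw [h0]

lemma count_mApply {r : ℕ} (th : Fin r → List ℕ) (a : ℕ) (w : List (Fin r)) :
    ((mApply th w).count a : ℚ) = ∑ i, (w.count i : ℚ) * ((th i).count a : ℚ) := by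
  induction w with
  | nil => simp [mApply_nil]
  | cons y w ih =>
    rw [mApply_cons, List.count_append]
    push_cast
    rw [ih]
    simp only [List.count_cons]
    push_cast
    simp only [add_mul, Finset.sum_add_distrib]
    simp [add_comm]

lemma length_mApply {r : ℕ} (th : Fin r → List ℕ) (w : List (Fin r)) :
    ((mApply th w).length : ℚ) = ∑ i, (w.count i : ℚ) * ((th i).length : ℚ) := by
  induction w with
  | nil => simp [mApply_nil]
  | cons y w ih =>
    rw [mApply_cons, List.length_append]
    push_cast
    rw [ih]
    simp only [List.count_cons]
    push_cast
    simp only [add_mul, Finset.sum_add_distrib]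
    simp [add_comm]

lemma pref_of_append {l₁ l₂ a b : List ℕ} (h : l₁ ++ a = l₂ ++ b) : l₁ <+: l₂ ∨ l₂ <+: l₁ := by
  rcases List.append_eq_append_iff.mp h with ⟨c, hc, _⟩ | ⟨c, hc, _⟩
  · left; exact ⟨c, hc.symm⟩
  · right; exact ⟨c, hc.symm⟩

lemma exists_pref {r : ℕ} (th : Fin r → List ℕ) (hne : ∀ i, th i ≠ [])
    (w w' : List (Fin r)) (hw : w ≠ w') (h : mApply th w = mApply th w') :
    ∃ y z, y ≠ z ∧ th y <+: th z := by
  induction w generalizing w' with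
  | nil =>
    cases w' with
    | nil => exact absurd rfl hw
    | cons y w' =>
      rw [mApply_nil, mApply_cons] at h
      have := hne y
      simp_all
  | cons x w ih =>
    cases w' with
    | nil =>
      rw [mApply_nil, mApply_cons] at h
      have := hne x
      simp_all
    | cons y w' =>
      rw [mApply_cons, mApply_cons] at h
      by_cases hxy : x = y
      · subst hxy
        exact ih w' (by rintro rfl; exact hw rfl) (List.append_cancel_left h)
      · rcases pref_of_append h with h | h
        · exact ⟨x, y, hxy, h⟩
        · exact ⟨y, x, Ne.symm hxy, h⟩

lemma defect_step {n : ℕ} (h : Fin n → List ℕ) (k : ℕ) : ∀ (r : ℕ) (g : Fin n → List (Fin r))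
    (th : Fin r → List ℕ), r + ∑ i, (th i).length ≤ k → (∀ x, h x = mApply th (g x)) →
    LinearIndependent ℚ (pk g) →
    ∃ (r : ℕ) (g : Fin n → List (Fin r)) (th : Fin r → List ℕ),
      (∀ x, h x = mApply th (g x)) ∧ LinearIndependent ℚ (pk g) ∧
      Function.Injective (mApply th) := by
  induction k with
  | zero =>
    intro r g th hk hh hl
    obtain rfl : r = 0 := by omega
    refine ⟨0, g, th, hh, hl, fun w w' _ => Subsingleton.elim _ _⟩
  | succ k ih =>
    intro r g th hk hh hl
    by_cases hinj : Function.Injective (mApply th)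
    · exact ⟨r, g, th, hh, hl, hinj⟩
    by_cases hne : ∀ i, th i ≠ []
    · have : ∃ w w', w ≠ w' ∧ mApply th w = mApply th w' := by
        unfold Function.Injective at hinj
        push Not at hinj
        obtain ⟨a, b, h1, h2⟩ := hinj
        exact ⟨a, b, h2, h1⟩
      obtain ⟨w, w', hw, hww⟩ := this
      obtain ⟨y, z, hyz, s, hs⟩ := exists_pref th hne w w' hw hww
      have hap : ∀ l : List (Fin r), mApply (Function.update th z s)
          (l.flatMap fun j => if j = z then [y, z] else [j]) = mApply th l := by
        intro l
        induction l with
        | nil => rfl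
        | cons a l ihl =>
          rw [List.flatMap_cons, mApply_append, ihl, mApply_cons]
          congr 1
          by_cases ha : a = z
          · subst ha
            simp [mApply, hyz, hs]
          · simp [mApply, ha]
      have hcnt : ∀ (l : List (Fin r)) (i : Fin r),
          (l.flatMap fun j => if j = z then [y, z] else [j]).count i
            = l.count i + if i = y then l.count z else 0 := by
        intro l i
        induction l with
        | nil => simp
        | cons a l ihl =>
          rw [List.flatMap_cons, List.count_append, ihl]
          by_cases ha : a = z
          · subst ha
            by_cases hi : i = y
            · subst hi
              simp [List.count_cons, hyz, Ne.symm hyz]; omega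
            · simp [List.count_cons, hi, Ne.symm hi]; omega
          · simp [List.count_cons, ha]; omega
      refine ih r (fun x => (g x).flatMap fun j => if j = z then [y, z] else [j])
        (Function.update th z s) ?_ (fun x => by rw [hap, hh]) ?_
      · have h1 := Finset.sum_update_of_mem (Finset.mem_univ z) (fun i => (th i).length) s.length
        have h2 := Finset.add_sum_erase Finset.univ (fun i => (th i).length) (Finset.mem_univ z)
        have h3 : ∀ i, (Function.update th z s i).length
            = Function.update (fun i => (th i).length) z s.length i := by
          intro i
          by_cases hi : i = z
          · subst hi; simp
          · simp [hi]
        simp only [h3]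
        rw [h1, Finset.sdiff_singleton_eq_erase]
        have h4 : (th z).length = (th y).length + s.length := by rw [← hs]; simp
        have h5 : 0 < (th y).length := List.length_pos_of_ne_nil (hne y)
        omega
      · rw [Fintype.linearIndependent_iff] at hl ⊢
        intro c hc
        have h1 : ∑ i, (c i + if i = z then c y else 0) • pk g i = 0 := by
          rw [← hc]
          funext x
          simp only [Finset.sum_apply, Pi.smul_apply, pk, hcnt, smul_eq_mul]
          push_cast
          simp only [add_mul, mul_add, Finset.sum_add_distrib]
          simp
        have h2 := hl _ h1
        have hy : c y = 0 := by simpa [hyz] using h2 y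
        intro i
        simpa [hy] using h2 i
    · push Not at hne
      obtain ⟨i, hi⟩ := hne
      cases r with
      | zero => exact i.elim0
      | succ r =>
        have hap : ∀ l : List (Fin (r + 1)), mApply (fun j => th (i.succAbove j))
          (l.filterMap (finSuccEquiv' i)) = mApply th l := by
          intro l
          induction l with
          | nil => rfl
          | cons a l ihl =>
            rw [mApply_cons]
            rcases Fin.eq_self_or_eq_succAbove i a with rfl | ⟨y, rfl⟩
            · simp [ihl, hi]
            · simp [ihl, mApply_cons]
        have hcnt : ∀ (l : List (Fin (r + 1))) (j : Fin r),
            (l.filterMap (finSuccEquiv' i)).count j = l.count (i.succAbove j) := by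
          intro l j
          induction l with
          | nil => rfl
          | cons a l ihl =>
            rcases Fin.eq_self_or_eq_succAbove i a with rfl | ⟨y, rfl⟩
            · simp [ihl, List.count_cons, (Fin.succAbove_ne _ _).symm]
            · simp [ihl, List.count_cons]
        refine ih r (fun x => (g x).filterMap (finSuccEquiv' i)) (fun j => th (i.succAbove j))
          ?_ (fun x => by rw [hap, hh]) ?_
        · rw [Fin.sum_univ_succAbove _ i] at hk
          omega
        · have := hl.comp i.succAbove (Fin.succAbove_right_injective)
          convert this using 1
          funext j x
          simp [pk, hcnt]

lemma defect {n : ℕ} (h : Fin n → List ℕ) :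
    ∃ (r : ℕ) (g : Fin n → List (Fin r)) (th : Fin r → List ℕ),
      (∀ x, h x = mApply th (g x)) ∧ LinearIndependent ℚ (pk g) ∧
      Function.Injective (mApply th) := by
  refine defect_step h _ n (fun x => [x]) h le_rfl (fun x => by simp [mApply]) ?_
  have := (Pi.basisFun ℚ (Fin n)).linearIndependent
  convert this using 1
  funext i x
  simp [pk, List.count_singleton, Pi.single_apply]

lemma mRank_le {n : ℕ} (h : Fin n → List ℕ) (B : Finset (List ℕ)) (hB : ∀ i, InStar B (h i)) :
    mRank h ≤ B.card := Nat.sInf_le ⟨B, rfl, hB⟩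

lemma mRank_le_fac {n r : ℕ} (h : Fin n → List ℕ) (g : Fin n → List (Fin r))
    (th : Fin r → List ℕ) (hh : ∀ x, h x = mApply th (g x)) : mRank h ≤ r := by
  refine (mRank_le h (Finset.univ.image th) ?_).trans
    (Finset.card_image_le.trans (by simp))
  intro x
  refine ⟨(g x).map th, ?_, (hh x).symm⟩
  intro u hu
  obtain ⟨i, _, rfl⟩ := List.mem_map.mp hu
  simp

lemma mRank_le_alph {n : ℕ} (A : Finset ℕ) (h : Fin n → List ℕ) (hA : IntoAlph A h) :
    mRank h ≤ A.card := by
  refine (mRank_le h (A.image fun a => [a]) ?_).trans Finset.card_image_le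
  intro x
  refine ⟨(h x).map fun a => [a], ?_, ?_⟩
  · intro u hu
    obtain ⟨a, ha, rfl⟩ := List.mem_map.mp hu
    exact Finset.mem_image_of_mem _ (hA x a ha)
  · generalize h x = l
    induction l with
    | nil => rfl
    | cons a l ih => simp [ih]

lemma one_empty {N : ℕ} (h : Fin (N + 1) → List ℕ) (hr : mRank h = N) (x y : Fin (N + 1))
    (hxy : x ≠ y) (hx : (h x).length = 0) : (h y).length ≠ 0 := by
  intro hy
  have h1 := mRank_le h (((Finset.univ.erase x).erase y).image h) ?_
  · have h2 := h1.trans Finset.card_image_le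
    rw [Finset.card_erase_of_mem (by simp [Ne.symm hxy]), Finset.card_erase_of_mem (by simp)] at h2
    simp at h2
    have := x.2; have := y.2
    have : x.val ≠ y.val := fun h => hxy (Fin.ext h)
    omega
  · intro i
    by_cases hi : h i = []
    · exact ⟨[], by simp, by simp [hi]⟩
    · refine ⟨[h i], ?_, by simp⟩
      intro u hu
      rw [List.mem_singleton.mp hu]
      apply Finset.mem_image_of_mem
      simp only [Finset.mem_erase, Finset.mem_univ, and_true]
      constructor
      · rintro rfl; exact hi (List.eq_nil_of_length_eq_zero hy)
      · rintro rfl; exact hi (List.eq_nil_of_length_eq_zero hx)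

/-- Structure of a solution of rank `n - 1`. -/
lemma structure_sol {N : ℕ} (h : Fin (N + 1) → List ℕ) (hr : mRank h = N)
    (u v : List (Fin (N + 1))) (huv : u ≠ v) (hs : mApply h u = mApply h v) :
    ∃ (g : Fin (N + 1) → List (Fin N)) (th : Fin N → List ℕ),
      (∀ x, h x = mApply th (g x)) ∧ LinearIndependent ℚ (pk g) ∧
      Function.Injective (mApply th) := by
  obtain ⟨r, g, th, hh, hl, hi⟩ := defect h
  have h1 : N ≤ r := hr ▸ mRank_le_fac h g th hh
  have h2 : r ≤ N + 1 := by
    have := hl.fintype_card_le_finrank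
    simpa using this
  have h3 : r ≠ N + 1 := by
    rintro rfl
    obtain ⟨x, hx⟩ := qw_diff_ne (fun x => (h x).length) (one_empty h hr) u v huv
    apply hx
    have hg : mApply g u = mApply g v := by
      apply hi
      rw [mApply_comp, mApply_comp]
      simpa [← hh] using hs
    have hk := kill (fun i => (X : ℤ[X]) ^ (th i).length) g u v hg
    have ht : (fun x => ((g x).map (fun i => (X : ℤ[X]) ^ (th i).length)).prod)
        = fun x => X ^ (h x).length := by
      funext x
      rw [hh]
      generalize g x = l
      induction l with
      | nil => simp [mApply_nil]
      | cons a l ih => simp [mApply_cons, ih, pow_add]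
    rw [ht] at hk
    exact congrFun (pk_full (evalRingHom (1 : ℤ)) _ (by simp) g hl _ hk) x
  obtain rfl : r = N := by omega
  exact ⟨g, th, hh, hl, hi⟩

lemma cover_top {N K : ℕ} (U : Fin K → Submodule ℚ (Fin N → ℚ))
    (hU : ∀ t : ℕ, ∃ j, (fun i : Fin N => ((t + 1 : ℕ) : ℚ) ^ (i : ℕ)) ∈ U j) :
    ∃ j, U j = ⊤ := by
  choose j hj using hU
  obtain ⟨j0, hj0⟩ := Finite.exists_infinite_fiber j
  refine ⟨j0, ?_⟩
  by_contra hne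
  obtain ⟨f, hf0, hf⟩ := Submodule.exists_le_ker_of_lt_top (U j0) (lt_top_iff_ne_top.mpr hne)
  let p : ℚ[X] := ∑ i : Fin N, C (f (Pi.single i 1)) * X ^ (i : ℕ)
  have hfs : ∀ v, f v = ∑ i, v i * f (Pi.single i 1) := by
    intro v
    rw [LinearMap.pi_apply_eq_sum_univ f v]
    refine Finset.sum_congr rfl fun i _ => ?_
    rw [smul_eq_mul]
    congr 2
    funext k
    simp [Pi.single_apply, eq_comm]
  have hp : p = 0 := by
    apply Polynomial.eq_zero_of_infinite_isRoot
    have hinf : (j ⁻¹' {j0}).Infinite := Set.infinite_coe_iff.mp hj0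
    have hinj : Set.InjOn (fun t : ℕ => ((t + 1 : ℕ) : ℚ)) (j ⁻¹' {j0}) := by
      intro a _ b _ hab
      have : a + 1 = b + 1 := Nat.cast_injective hab
      omega
    refine (hinf.image hinj).mono ?_
    rintro _ ⟨t, ht, rfl⟩
    have h1 := hj t
    rw [Set.mem_preimage, Set.mem_singleton_iff] at ht
    rw [ht] at h1
    have h2 := LinearMap.mem_ker.mp (hf h1)
    rw [hfs] at h2
    simp only [Set.mem_ofPred_eq, IsRoot.def, p, eval_finsetSum, eval_mul, eval_C, eval_pow, eval_X]
    rw [← h2]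
    exact Finset.sum_congr rfl fun i _ => mul_comm _ _
  apply hf0
  ext i
  have h1 := congrArg (fun q => coeff q (i : ℕ)) hp
  simp only [p, finsetSum_coeff, coeff_C_mul, coeff_X_pow, coeff_zero] at h1
  rw [Finset.sum_eq_single i] at h1
  · simpa using h1
  · intro b _ hb
    have : (i : ℕ) ≠ b := fun h => hb (Fin.ext h.symm)
    simp [this]
  · simp

lemma rank_new {n N : ℕ} (a : Fin N → ℕ) (ha : Function.Injective a) (g : Fin n → List (Fin N))
    (hg : LinearIndependent ℚ (pk g)) (lam : Fin N → ℕ) (hl : ∀ i, lam i ≠ 0) :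
    mRank (fun x => mApply (fun i => List.replicate (lam i) (a i)) (g x)) = N := by
  apply le_antisymm (mRank_le_fac _ g _ fun x => rfl)
  set h' := fun x => mApply (fun i => List.replicate (lam i) (a i)) (g x) with hh'
  refine le_csInf ⟨_, Finset.univ.image h', rfl, fun x => ⟨[h' x], by simp, by simp⟩⟩ ?_
  rintro b ⟨B, rfl, hB⟩
  let cnt : List ℕ → Fin N → ℚ := fun w i => (w.count (a i) : ℚ)
  have hcx : ∀ x i, cnt (h' x) i = pk g i x * lam i := by
    intro x i
    simp only [cnt, h']
    rw [count_mApply, Finset.sum_eq_single i]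
    · simp [pk]
    · intro k _ hk
      have : a k ≠ a i := fun h => hk (ha h)
      simp [List.count_replicate, this]
    · simp
  set S := Submodule.span ℚ ((B.image cnt : Finset (Fin N → ℚ)) : Set (Fin N → ℚ)) with hS
  have hmem : ∀ x, cnt (h' x) ∈ S := by
    intro x
    obtain ⟨l, hl1, hl2⟩ := hB x
    rw [← hl2]
    clear hl2
    induction l with
    | nil =>
      have : cnt ([] : List (List ℕ)).flatten = 0 := by funext i; simp [cnt]
      rw [this]; exact S.zero_mem
    | cons w l ih =>
      have : cnt (w :: l).flatten = cnt w + cnt l.flatten := by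
        funext i
        simp only [cnt, Pi.add_apply, List.flatten_cons, List.count_append]
        push_cast
        rfl
      rw [this]
      refine S.add_mem (Submodule.subset_span ?_) (ih fun u hu => hl1 u (by simp [hu]))
      exact Finset.mem_coe.mpr (Finset.mem_image_of_mem _ (hl1 w (by simp)))
  have htop : S = ⊤ := by
    by_contra hne
    obtain ⟨f, hf0, hf⟩ := Submodule.exists_le_ker_of_lt_top S (lt_top_iff_ne_top.mpr hne)
    have hfs : ∀ v, f v = ∑ i, v i * f (Pi.single i 1) := by
      intro v
      rw [LinearMap.pi_apply_eq_sum_univ f v]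
      refine Finset.sum_congr rfl fun i _ => ?_
      rw [smul_eq_mul]
      congr 2
      funext k
      simp [Pi.single_apply, eq_comm]
    rw [Fintype.linearIndependent_iff] at hg
    have h1 := hg (fun i => lam i * f (Pi.single i 1)) (by
      funext x
      have h2 := LinearMap.mem_ker.mp (hf (hmem x))
      rw [hfs] at h2
      simp only [Finset.sum_apply, Pi.smul_apply, smul_eq_mul, Pi.zero_apply]
      rw [← h2]
      refine Finset.sum_congr rfl fun i _ => ?_
      rw [hcx]; ring)
    apply hf0
    ext i
    have h3 := h1 i
    simpa [hl i] using h3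
  have h1 := finrank_span_finset_le_card (R := ℚ) (B.image cnt)
  rw [Set.finrank, ← hS, htop, finrank_top] at h1
  simp only [Module.finrank_fintype_fun_eq_card, Fintype.card_fin] at h1
  exact h1.trans Finset.card_image_le

lemma cover_span {N K : ℕ} (A : Finset ℕ) (hN : N ≤ A.card) (g : Fin (N + 1) → List (Fin N))
    (hg : LinearIndependent ℚ (pk g)) (V : Fin K → Submodule ℚ (Fin (N + 1) → ℚ))
    (hdim : ∀ j, Module.finrank ℚ (V j) = N)
    (hcov : ∀ th : Fin N → List ℕ, IntoAlph A (fun x => mApply th (g x)) →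
      mRank (fun x => mApply th (g x)) = N → ∃ j, lenQ (fun x => mApply th (g x)) ∈ V j) :
    ∃ j, V j = Submodule.span ℚ (Set.range (pk g)) := by
  let a : Fin N → ℕ := fun i => A.orderEmbOfFin rfl (Fin.castLE hN i)
  have ha : Function.Injective a := fun i k h =>
    Fin.castLE_injective hN ((A.orderEmbOfFin rfl).injective h)
  have haA : ∀ i, a i ∈ A := fun i => A.orderEmbOfFin_mem rfl _
  let Phi : (Fin N → ℚ) →ₗ[ℚ] (Fin (N + 1) → ℚ) := Fintype.linearCombination ℚ (pk g)
  obtain ⟨j, hj⟩ := cover_top (fun j => (V j).comap Phi) (by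
    intro t
    obtain ⟨j, hj⟩ := hcov (fun i => List.replicate ((t + 1) ^ (i : ℕ)) (a i)) (by
        intro x b hb
        simp only [mApply, List.mem_flatten, List.mem_map] at hb
        obtain ⟨_, ⟨i, _, rfl⟩, hb⟩ := hb
        rw [List.eq_of_mem_replicate hb]
        exact haA i) (rank_new a ha g hg _ (fun i => by positivity))
    refine ⟨j, ?_⟩
    rw [Submodule.mem_comap]
    convert hj using 1
    funext x
    simp only [Phi, Fintype.linearCombination_apply, lenQ, Finset.sum_apply, Pi.smul_apply,
      smul_eq_mul]
    rw [length_mApply]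
    refine Finset.sum_congr rfl fun i _ => ?_
    simp [pk, mul_comm])
  refine ⟨j, ?_⟩
  symm
  apply Submodule.eq_of_le_of_finrank_eq
  · rw [Submodule.span_le]
    rintro _ ⟨i, rfl⟩
    have h1 : Pi.single i (1 : ℚ) ∈ (V j).comap Phi := by rw [hj]; trivial
    rw [Submodule.mem_comap] at h1
    simpa [Phi, Fintype.linearCombination_apply_single] using h1
  · rw [hdim, finrank_span_eq_card hg]; simp

lemma transfer {N : ℕ} (h : Fin (N + 1) → List ℕ) (hpos : ∀ x, ∀ a ∈ h x, 0 < a)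
    (hr : mRank h = N) (u v u' v' : List (Fin (N + 1))) (huv : u ≠ v)
    (hs : mApply h u = mApply h v) (g : Fin (N + 1) → List (Fin N)) (th : Fin N → List ℕ)
    (hh : ∀ x, h x = mApply th (g x)) (hl : LinearIndependent ℚ (pk g))
    (hi : Function.Injective (mApply th)) (g2 : Fin (N + 1) → List (Fin N))
    (hl2 : LinearIndependent ℚ (pk g2)) (hE : mApply g2 u = mApply g2 v)
    (hE' : mApply g2 u' = mApply g2 v')
    (hspan : Submodule.span ℚ (Set.range (pk g)) = Submodule.span ℚ (Set.range (pk g2))) :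
    mApply h u' = mApply h v' := by
  have hVne : Submodule.span ℚ (Set.range (pk g)) ≠ ⊤ := by
    intro ht
    have h1 := finrank_span_eq_card hl
    rw [ht, finrank_top] at h1
    simp at h1
  obtain ⟨x0, hx0⟩ := exists_single _ hVne
  have hd := del_row _ hl x0 hx0
  have hd2 := del_row _ hl2 x0 (hspan ▸ hx0)
  let D : {R : Type} → [CommRing R] → (Fin (N + 1) → R) → List (Fin (N + 1)) →
    List (Fin (N + 1)) → Fin (N + 1) → R := fun t u v x => qw t u x - qw t v x
  have hDmap : ∀ {R R' : Type} [CommRing R] [CommRing R'] (f : R →+* R') (t : Fin (N + 1) → R)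
      (u v x), f (D t u v x) = D (fun y => f (t y)) u v x := by
    intro R R' _ _ f t u v x
    simp only [D, map_sub, map_qw]
  -- nonvanishing at `x0`
  let tL : Fin (N + 1) → ℤ[X] := fun x => X ^ (h x).length
  have hQ0 : D tL u v x0 ≠ 0 := by
    intro h0
    obtain ⟨x, hx⟩ := qw_diff_ne (fun x => (h x).length) (one_empty h hr) u v huv
    apply hx
    have hg : mApply g u = mApply g v := by
      apply hi
      rw [mApply_comp, mApply_comp]
      simpa [← hh] using hs
    have hk := kill (fun i => (X : ℤ[X]) ^ (th i).length) g u v hg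
    have ht : (fun x => ((g x).map (fun i => (X : ℤ[X]) ^ (th i).length)).prod)
        = fun x => X ^ (h x).length := by
      funext x
      rw [hh]
      generalize g x = l
      induction l with
      | nil => simp [mApply_nil]
      | cons a l ih => simp [mApply_cons, ih, pow_add]
    rw [ht] at hk
    exact congrFun (pk_codim (evalRingHom (1 : ℤ)) _ (by simp) g x0 hd _ hk h0) x
  -- proportionality
  let F : Fin (N + 1) → MvPolynomial (Fin (N + 1)) ℤ := fun y =>
    D MvPolynomial.X u v x0 * D MvPolynomial.X u' v' y
      - D MvPolynomial.X u' v' x0 * D MvPolynomial.X u v y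
  have hprop : ∀ y, D tL u v x0 * D tL u' v' y - D tL u' v' x0 * D tL u v y = 0 := by
    intro y
    have hLmem : lenQ h ∈ Submodule.span ℚ (Set.range (pk g2)) := by
      rw [← hspan, Submodule.mem_span_range_iff_exists_fun]
      refine ⟨fun i => (th i).length, ?_⟩
      funext x
      simp only [lenQ, Finset.sum_apply, Pi.smul_apply, smul_eq_mul]
      rw [hh, length_mApply]
      refine Finset.sum_congr rfl fun i _ => ?_
      simp [pk, mul_comm]
    obtain ⟨mu, hmu⟩ := (Submodule.mem_span_range_iff_exists_fun ℚ).mp hLmem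
    have hsp := special
      (fun x => Finsupp.equivFunOnFinite.symm (fun i => (g2 x).count i)) (fun x => (h x).length)
      mu (by
        intro x
        have := congrFun hmu x
        simp only [lenQ, Finset.sum_apply, Pi.smul_apply, smul_eq_mul, pk] at this
        rw [← this]
        simp) (F y) (by
        simp only [← prod_monomial]
        let t2 : Fin (N + 1) → MvPolynomial (Fin N) ℤ :=
          fun x => ((g2 x).map (fun i => (MvPolynomial.X i : MvPolynomial (Fin N) ℤ))).prod
        have hk := kill (fun i => (MvPolynomial.X i : MvPolynomial (Fin N) ℤ)) g2 u v hE
        have hk' := kill (fun i => (MvPolynomial.X i : MvPolynomial (Fin N) ℤ)) g2 u' v' hE'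
        have hz := pk_codim (MvPolynomial.eval (fun _ => (1 : ℤ)))
          (fun i => (MvPolynomial.X i : MvPolynomial (Fin N) ℤ)) (by simp) g2 x0 hd2
          (fun y => D t2 u v x0 * D t2 u' v' y - D t2 u' v' x0 * D t2 u v y) (by
            intro i
            simp only [sub_mul, Finset.sum_sub_distrib, mul_assoc]
            rw [← Finset.mul_sum, ← Finset.mul_sum]
            have e1 : ∑ x, D t2 u v x * qw (fun i => (MvPolynomial.X i : MvPolynomial (Fin N) ℤ))
              (g2 x) i = 0 := hk i
            have e2 : ∑ x, D t2 u' v' x * qw (fun i => (MvPolynomial.X i : MvPolynomial (Fin N) ℤ))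
              (g2 x) i = 0 := hk' i
            rw [e1, e2]; simp) (by ring)
        have hzy := congrFun hz y
        have hm : ∀ a b x, MvPolynomial.aeval t2 (D MvPolynomial.X a b x : MvPolynomial (Fin (N + 1)) ℤ)
            = D t2 a b x := by
          intro a b x
          have := hDmap (MvPolynomial.aeval (R := ℤ) t2).toRingHom MvPolynomial.X a b x
          simpa using this
        show MvPolynomial.aeval t2 (F y) = 0
        simp only [F, map_sub, map_mul, hm]
        exact hzy)
    have hm : ∀ a b x, MvPolynomial.aeval tL (D MvPolynomial.X a b x : MvPolynomial (Fin (N + 1)) ℤ)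
        = D tL a b x := by
      intro a b x
      have := hDmap (MvPolynomial.aeval (R := ℤ) tL).toRingHom MvPolynomial.X a b x
      simpa using this
    have hsp' : MvPolynomial.aeval tL (F y) = 0 := hsp
    simpa only [F, map_sub, map_mul, hm] using hsp'
  have hposm : ∀ w, ∀ a ∈ mApply h w, 0 < a := by
    intro w a ha
    simp only [mApply, List.mem_flatten, List.mem_map] at ha
    obtain ⟨_, ⟨i, _, rfl⟩, hb⟩ := ha
    exact hpos i a hb
  have hsum : ∀ a b, cPoly (mApply h a) - cPoly (mApply h b) = ∑ x, D tL a b x * cPoly (h x) := by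
    intro a b
    rw [cPoly_mApply, cPoly_mApply, ← Finset.sum_sub_distrib]
    refine Finset.sum_congr rfl fun x _ => ?_
    simp only [D, tL]; ring
  apply cPoly_inj _ _ (hposm _) (hposm _)
  rw [← sub_eq_zero]
  apply (mul_eq_zero.mp _).resolve_left hQ0
  have e1 : ∑ x, D tL u v x * cPoly (h x) = 0 := by rw [← hsum, hs, sub_self]
  have e2 : D tL u v x0 * ∑ x, D tL u' v' x * cPoly (h x)
      = D tL u' v' x0 * ∑ x, D tL u v x * cPoly (h x) := by
    rw [Finset.mul_sum, Finset.mul_sum]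
    refine Finset.sum_congr rfl fun x _ => ?_
    have := hprop x
    linear_combination cPoly (h x) * this
  rw [hsum, e2, e1, mul_zero]

/-- Let `E₁, …, E_m` be nontrivial equations on `n` unknowns with
`Sol_{n−1}(E₁) ⊋ Sol_{n−1}(E₁,E₂) ⊋ ⋯ ⊋ Sol_{n−1}(E₁,…,E_m) ≠ ∅`. If the length types of
the common solutions of `E₁` and `E₂` of rank `n − 1` are covered by a union of `N`
`(n − 1)`-dimensional subspaces of `ℚⁿ`, then `m ≤ N + 1`. -/
theorem chain_length_le_cover_size {n m : ℕ}
    (A : Finset ℕ) (hA : ∀ a ∈ A, 0 < a)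
    (eqs : Fin m → List (Fin n) × List (Fin n))
    (hnt : ∀ i, (eqs i).1 ≠ (eqs i).2)
    (hchain : ∀ k : ℕ, 1 ≤ k → k < m →
      {h : Fin n → List ℕ | IntoAlph A h ∧ mRank h = n - 1 ∧
          ∀ i : Fin m, (i : ℕ) < k + 1 → mApply h (eqs i).1 = mApply h (eqs i).2}
        ⊂ {h : Fin n → List ℕ | IntoAlph A h ∧ mRank h = n - 1 ∧
            ∀ i : Fin m, (i : ℕ) < k → mApply h (eqs i).1 = mApply h (eqs i).2})
    (hne : {h : Fin n → List ℕ | IntoAlph A h ∧ mRank h = n - 1 ∧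
        ∀ i : Fin m, mApply h (eqs i).1 = mApply h (eqs i).2}.Nonempty)
    (N : ℕ) (V : Fin N → Submodule ℚ (Fin n → ℚ))
    (hdim : ∀ j, Module.finrank ℚ (V j) = n - 1)
    (hcov : ∀ h : Fin n → List ℕ, IntoAlph A h → mRank h = n - 1 →
      (∀ i : Fin m, (i : ℕ) < 2 → mApply h (eqs i).1 = mApply h (eqs i).2) →
      ∃ j, lenQ h ∈ V j) :
    m ≤ N + 1 := by
  rcases Nat.lt_or_ge m 2 with hm | hm
  · omega
  rcases n with _ | n
  · exact absurd (Subsingleton.elim _ _) (hnt ⟨0, by omega⟩)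
  simp only [Nat.add_sub_cancel] at hchain hne hdim hcov
  -- a solution for every level
  have hex : ∀ c : Fin (m - 1), ∃ h : Fin (n + 1) → List ℕ, IntoAlph A h ∧ mRank h = n ∧
      (∀ i : Fin m, (i : ℕ) < c + 2 → mApply h (eqs i).1 = mApply h (eqs i).2) ∧
      (∀ i : Fin m, (i : ℕ) = c + 2 → mApply h (eqs i).1 ≠ mApply h (eqs i).2) := by
    intro c
    by_cases hc : (c : ℕ) + 2 < m
    · obtain ⟨_, hnot⟩ := hchain (c + 2) (by omega) hc
      rw [Set.not_subset] at hnot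
      obtain ⟨h, ⟨h1, h2, h3⟩, h4⟩ := hnot
      refine ⟨h, h1, h2, h3, ?_⟩
      intro i hi he
      apply h4
      refine ⟨h1, h2, fun k hk => ?_⟩
      rcases Nat.lt_or_ge k (c + 2) with hlt | hge
      · exact h3 k hlt
      · have : k = i := Fin.ext (by omega)
        rw [this]; exact he
    · obtain ⟨h, h1, h2, h3⟩ := hne
      refine ⟨h, h1, h2, fun i _ => h3 i, ?_⟩
      intro i hi
      have := i.2
      omega
  choose h hA1 hr hs hns using hex
  have hst := fun c => structure_sol (h c) (hr c) (eqs ⟨0, by omega⟩).1 (eqs ⟨0, by omega⟩).2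
    (hnt _) (hs c ⟨0, by omega⟩ (by simp))
  choose g th hh hl hi using hst
  have hgs : ∀ c : Fin (m - 1), ∀ i : Fin m, (i : ℕ) < c + 2 →
      mApply (g c) (eqs i).1 = mApply (g c) (eqs i).2 := by
    intro c i hic
    apply hi c
    rw [mApply_comp, mApply_comp]
    simpa [← hh] using hs c i hic
  have hj : ∀ c, ∃ j, V j = Submodule.span ℚ (Set.range (pk (g c))) := by
    intro c
    refine cover_span A ((hr c) ▸ mRank_le_alph A (h c) (hA1 c)) (g c) (hl c) V hdim ?_
    intro th' ha hrk
    refine hcov _ ha hrk ?_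
    intro i hi2
    rw [← mApply_comp, ← mApply_comp, hgs c i (by omega)]
  choose j hj using hj
  have key : ∀ c d, c < d → j c ≠ j d := by
    intro c d hcd hjj
    have hcd' : (c : ℕ) < d := hcd
    have hd := d.2
    have hc2 : (c : ℕ) + 2 < m := by omega
    refine hns c ⟨c + 2, hc2⟩ rfl ?_
    refine transfer (h c) (fun x a ha => hA a (hA1 c x a ha)) (hr c) (eqs ⟨0, by omega⟩).1
      (eqs ⟨0, by omega⟩).2 _ _ (hnt _) (hs c ⟨0, by omega⟩ (by simp)) (g c) (th c) (hh c) (hl c) (hi c) (g d)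
      (hl d) (hgs d ⟨0, by omega⟩ (by simp)) (hgs d ⟨c + 2, hc2⟩ (by simpa using hcd')) ?_
    rw [← hj c, ← hj d, hjj]
  have hinj : Function.Injective j := by
    intro c d hcd
    rcases lt_trichotomy c d with hlt | heq | hgt
    · exact absurd hcd (key c d hlt)
    · exact heq
    · exact absurd hcd.symm (key d c hgt)
  have := Fintype.card_le_of_injective j hinj
  simp only [Fintype.card_fin] at this
  omega
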